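/- (Feasibility under non-binding bounds; this is the core of the proofs of Lemma 2 and Theorem 2, where agents processed one at a time can always take the earliest collision-free slot at each successive intersection of their route.) Let a CMMI instance be given, let K = |𝒦|, let m = max_{k∈𝒦} |r_k^-|, and suppose: K_UB ≥ K; T_UB ≥ K − 1; and T ≥ max_{k∈𝒦} ( T_k^o + Σ_{(i,j) a consecutive pair of r_k} L_{(i,j)} ) + m·(K − 1). Then the set of feasible allocations is nonempty; moreover there exists a feasible allocation a in which 0 ≤ w_{i,k} ≤ K − 1 for every (i,k) ∈ IK. -/

import Mathlib

noncomputable section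
open scoped Classical
open Finset

/-- An allocation: `a i k` is the slot (in `𝒯 ∪ {∅}`) of car `k` at intersection `i`. -/
abbrev Alloc := ℕ → ℕ → Option ℕ

/-- A CMMI (coordinated management of multiple intersections) instance. -/
structure CMMI where
  /-- horizon: time slots are `{0, …, T}` -/
  T : ℕ
  /-- intersections -/
  I : Finset ℕ
  /-- directed edges -/
  E : Finset (ℕ × ℕ)
  hE : ∀ e ∈ E, e.1 ∈ I ∧ e.2 ∈ I
  /-- edge lengths -/
  L : ℕ × ℕ → ℕ
  hL : ∀ e ∈ E, 1 ≤ L e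
  /-- cars -/
  K : Finset ℕ
  /-- route of each car -/
  route : ℕ → List ℕ
  hlen : ∀ k ∈ K, 2 ≤ (route k).length
  hnodup : ∀ k ∈ K, (route k).Nodup
  hmem : ∀ k ∈ K, ∀ i ∈ route k, i ∈ I
  hedge : ∀ k ∈ K, ∀ p ∈ (route k).zip (route k).tail, p ∈ E
  /-- departure times -/
  Tdep : ℕ → ℕ
  hTdep : ∀ k ∈ K, Tdep k ≤ T
  /-- crossing sets at each intersection; a path at `i` is a pair
  (incoming predecessor — `none` for the special departure path, outgoing successor). -/
  X : ℕ → Set (Set (Option ℕ × ℕ))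
  /-- convention: the special departure path lies in a common crossing set with
  every path having the same outgoing edge -/
  hX : ∀ i ∈ I, ∀ p : Option ℕ × ℕ, ∃ x ∈ X i, ((none : Option ℕ), p.2) ∈ x ∧ p ∈ x
  /-- waiting-time bound -/
  TUB : ℕ
  /-- capacity bound -/
  KUB : ℕ

namespace CMMI
variable (M : CMMI)

/-- `r_k^-`: the route without its last intersection. -/
def rminus (k : ℕ) : List ℕ := (M.route k).dropLast

/-- the consecutive pairs of the route of `k` -/
def consec (k : ℕ) : List (ℕ × ℕ) := (M.route k).zip (M.route k).tail

/-- `γ(i,k)`: the predecessor of `i` on the route of `k` (if any). -/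
def pred (k i : ℕ) : Option ℕ := ((M.consec k).find? (fun p => p.2 == i)).map Prod.fst

/-- the successor of `i` on the route of `k` (if any). -/
def succ (k i : ℕ) : Option ℕ := ((M.consec k).find? (fun p => p.1 == i)).map Prod.snd

/-- the path `p_{i,k}` of car `k` at intersection `i` (determined by its route;
for the first intersection the incoming component is `none`, the special departure path). -/
def pathOf (k i : ℕ) : Option (Option ℕ × ℕ) := (M.succ k i).map (fun j => (M.pred k i, j))

/-- a valid allocation takes slots in `𝒯 ∪ {∅}` -/
def IsAlloc (a : Alloc) : Prop := ∀ i k t, a i k = some t → t ≤ M.T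

/-- waiting time `w_{i,k}` (an integer) -/
def w (a : Alloc) (i k : ℕ) : ℤ :=
  match M.pred k i with
  | none => 0
  | some j =>
    match a i k, a j k with
    | some t, some s => (t : ℤ) - ((s : ℤ) + (M.L (j, i) : ℤ))
    | _, _ => 0

/-- delay `D_k(a)` of car `k` -/
def Dk (a : Alloc) (k : ℕ) : ℤ := ((M.rminus k).map (fun i => M.w a i k)).sum

/-- total delay `D(a)` -/
def D (a : Alloc) : ℤ := ∑ k ∈ M.K, M.Dk a k

/-- (wb) holds at `(i,k)` -/
def WBok (a : Alloc) (i k : ℕ) : Prop := 0 ≤ M.w a i k ∧ M.w a i k ≤ (M.TUB : ℤ)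

/-- number of cars `k` with `(i,k) ∈ IK` and `∅ ≠ a_{i,k} ≤ t` -/
def cnt (a : Alloc) (i t : ℕ) : ℕ :=
  (M.K.filter (fun k => i ∈ M.rminus k ∧ ∃ s, a i k = some s ∧ s ≤ t)).card

/-- (lcap) holds at time `t` and edge `e` -/
def LCapOK (a : Alloc) (t : ℕ) (e : ℕ × ℕ) : Prop :=
  (M.cnt a e.1 t : ℤ) - (M.cnt a e.2 t : ℤ) ≤ (M.KUB : ℤ)

/-- (dep) is violated for car `k` -/
def DepViol (a : Alloc) (k : ℕ) : Prop :=
  ∃ i t, (M.route k).head? = some i ∧ a i k = some t ∧ t < M.Tdep k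

/-- (arr) is violated for car `k` -/
def ArrViol (a : Alloc) (k : ℕ) : Prop :=
  ∃ iω l t, (M.route k).getLast? = some iω ∧ M.pred k iω = some l ∧ a l k = some t
    ∧ M.T < t + M.L (l, iω)

/-- (col) is violated at intersection `i` -/
def ColViolAt (a : Alloc) (i : ℕ) : Prop :=
  ∃ k ∈ M.K, ∃ k' ∈ M.K, k ≠ k' ∧ i ∈ M.rminus k ∧ i ∈ M.rminus k'
    ∧ a i k = a i k' ∧ a i k ≠ none
    ∧ ∃ p p', M.pathOf k i = some p ∧ M.pathOf k' i = some p'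
      ∧ ∃ x ∈ M.X i, p ∈ x ∧ p' ∈ x

/-- (fwd) is violated somewhere on the route of `k` -/
def FwdViolK (a : Alloc) (k : ℕ) : Prop :=
  ∃ i ∈ M.rminus k, ∃ j, M.pred k i = some j ∧ a i k ≠ none ∧ a j k = none

/-- (alloc) is violated somewhere on the route of `k` -/
def NoneViolK (a : Alloc) (k : ℕ) : Prop := ∃ i ∈ M.rminus k, a i k = none

/-- (wb) is violated somewhere on the route of `k` -/
def WBviolK (a : Alloc) (k : ℕ) : Prop := ∃ i ∈ M.rminus k, ¬ M.WBok a i k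

/-- feasibility of an allocation: (wb), (lcap), (dep), (arr), (col), (fwd), (alloc) -/
def Feasible (a : Alloc) : Prop :=
  (∀ k ∈ M.K, ∀ i ∈ M.rminus k, M.WBok a i k)
  ∧ (∀ e ∈ M.E, ∀ t ≤ M.T, M.LCapOK a t e)
  ∧ (∀ k ∈ M.K, ¬ M.DepViol a k)
  ∧ (∀ k ∈ M.K, ¬ M.ArrViol a k)
  ∧ (∀ i ∈ M.I, ¬ M.ColViolAt a i)
  ∧ (∀ k ∈ M.K, ¬ M.FwdViolK a k)
  ∧ (∀ k ∈ M.K, ¬ M.NoneViolK a k)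

/-- `|IK|`, the number of allocation variables -/
def nIK : ℕ := ∑ k ∈ M.K, (M.rminus k).length

/-- `max_{e ∈ ℰ} L_e` -/
def maxL : ℕ := M.E.sup M.L

end CMMI

/-- indicator `χ` -/
def chi (P : Prop) : ℝ := if P then 1 else 0

/-- penalty constants -/
structure Pen where
  Pfwd : ℝ
  Pcol : ℝ
  Pnone : ℝ
  P2 : ℝ
  P1 : ℝ

/-- the ordering `P_fwd > P_col > P_none > P_2 > P_1 > 0` -/
def Pen.Order (P : Pen) : Prop :=
  P.Pcol < P.Pfwd ∧ P.Pnone < P.Pcol ∧ P.P2 < P.Pnone ∧ P.P1 < P.P2 ∧ 0 < P.P1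

/-!
Time-division multiplexing: give the `K` cars distinct residues modulo `K`, and let each car occupy
only slots in its own residue class, so that no two cars ever hold the same slot. A car departs at
the first slot of its class after its departure time and travels every edge in the length of the
edge rounded up to a multiple of `K`; departing and traversing an edge then each cost at most
`K - 1` slots of waiting, which is what the horizon and the waiting-time bound leave room for.
-/

/-- The least multiple of `N` that is at least `n` (for `0 < N`). -/
def roundUp (N n : ℕ) : ℕ := N * (n ⌈/⌉ N)

lemma dvd_roundUp (N n : ℕ) : N ∣ roundUp N n := dvd_mul_right _ _

lemma le_roundUp {N : ℕ} (hN : 0 < N) (n : ℕ) : n ≤ roundUp N n := le_smul_ceilDiv hN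

lemma roundUp_lt_add {N : ℕ} (hN : 0 < N) (n : ℕ) : roundUp N n < n + N := by
  have h := Nat.mul_div_le (n + N - 1) N
  rw [roundUp, Nat.ceilDiv_eq_add_pred_div]
  omega

lemma exists_injOn_lt_card {α : Type*} (s : Finset α) :
    ∃ c : α → ℕ, (∀ x ∈ s, c x < #s) ∧ Set.InjOn c s := by
  obtain ⟨c, hc, hinj⟩ := s.finite_toSet.exists_injOn_of_encard_le
    (t := (range #s : Set ℕ)) (by simp only [Set.encard_coe_eq_coe_finsetCard, card_range, le_refl])
  exact ⟨c, fun x hx => mem_range.1 (hc hx), hinj⟩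

lemma zip_tail_getElem?_idxOf {α : Type*} [DecidableEq α] {r : List α} (hr : r.Nodup) {x y : α}
    (h : (x, y) ∈ r.zip r.tail) :
    (r.zip r.tail)[r.idxOf x]? = some (x, y) ∧ r.idxOf y = r.idxOf x + 1 := by
  obtain ⟨p, hp, hxy⟩ := List.mem_iff_getElem.1 h
  have hget := List.getElem?_eq_some_iff.2 ⟨hp, hxy⟩
  rw [List.getElem_zip, List.getElem_tail, Prod.mk.injEq] at hxy
  obtain ⟨rfl, rfl⟩ := hxy
  rw [hr.idxOf_getElem, hr.idxOf_getElem]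
  exact ⟨hget, rfl⟩

lemma idxOf_lt_length_dropLast {α : Type*} [DecidableEq α] {r : List α} {x : α}
    (h : x ∈ r.dropLast) : r.idxOf x < r.dropLast.length := by
  rw [← (List.dropLast_prefix r).idxOf_eq_of_mem h]
  exact List.idxOf_lt_length_of_mem h

namespace CMMI

variable {M : CMMI} {b : ℕ} {c : ℕ → ℕ} {i j k : ℕ}

lemma mem_consec_of_pred_eq_some (h : M.pred k i = some j) : (j, i) ∈ M.consec k := by
  obtain ⟨⟨x, y⟩, hfind, rfl⟩ := Option.map_eq_some_iff.1 h
  obtain rfl : y = i := by simpa only [beq_iff_eq] using List.find?_some hfind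
  exact List.mem_of_find?_eq_some hfind

lemma mem_rminus_of_pred_eq_some (h : M.pred k i = some j) : j ∈ M.rminus k := by
  obtain ⟨p, hp, hji⟩ := List.mem_iff_getElem.1 (mem_consec_of_pred_eq_some h)
  simp only [consec, List.length_zip, List.length_tail] at hp
  simp only [consec, List.getElem_zip, Prod.mk.injEq] at hji
  refine List.mem_iff_getElem.2 ⟨p, ?_, ?_⟩
  · rw [rminus, List.length_dropLast]
    omega
  · simpa only [rminus, List.getElem_dropLast] using hji.1

lemma idxOf_route_of_pred_eq_some (hk : k ∈ M.K) (h : M.pred k i = some j) :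
    (M.route k).idxOf i = (M.route k).idxOf j + 1 :=
  (zip_tail_getElem?_idxOf (M.hnodup k hk) (mem_consec_of_pred_eq_some h)).2

/-- The total weight `f` of the edges that car `k` traverses before it reaches intersection `i`;
for `f = M.L` this is the distance travelled. -/
def distTo (M : CMMI) (f : ℕ × ℕ → ℕ) (k i : ℕ) : ℕ :=
  (((M.consec k).take ((M.route k).idxOf i)).map f).sum

section distTo

variable {f g : ℕ × ℕ → ℕ}

lemma distTo_of_pred_eq_some (hk : k ∈ M.K) (h : M.pred k i = some j) :
    M.distTo f k i = M.distTo f k j + f (j, i) := by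
  have hget : (M.consec k)[(M.route k).idxOf j]? = some (j, i) :=
    (zip_tail_getElem?_idxOf (M.hnodup k hk) (mem_consec_of_pred_eq_some h)).1
  simp only [distTo, idxOf_route_of_pred_eq_some hk h, List.take_add_one, hget,
    Option.toList_some, List.map_append, List.map_cons, List.map_nil, List.sum_append,
    List.sum_singleton]

lemma distTo_le_sum_consec : M.distTo f k i ≤ ((M.consec k).map f).sum :=
  (((M.consec k).take_sublist _).map f).sum_le_sum fun _ _ => Nat.zero_le _

lemma dvd_distTo {N : ℕ} (h : ∀ e, N ∣ f e) : N ∣ M.distTo f k i :=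
  List.dvd_sum (by simpa only [List.forall_mem_map] using fun e _ => h e)

lemma distTo_le_distTo_add_mul (h : ∀ e, f e ≤ g e + b) :
    M.distTo f k i ≤ M.distTo g k i + (M.route k).idxOf i * b := by
  calc M.distTo f k i
      ≤ (((M.consec k).take ((M.route k).idxOf i)).map fun e => g e + b).sum :=
        List.sum_le_sum fun e _ => h e
    _ = M.distTo g k i + ((M.consec k).take ((M.route k).idxOf i)).length * b := by
        rw [List.sum_map_add, List.map_const', List.sum_replicate, smul_eq_mul, distTo]
    _ ≤ M.distTo g k i + (M.route k).idxOf i * b := by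
        gcongr
        exact List.length_take_le _ _

end distTo

/-- The slot of car `k` at intersection `i` when the car uses only slots congruent to `c k` modulo
`b + 1`: it departs at the first such slot from `M.Tdep k` on (for `c k ≤ b`) and traverses each
edge in its length rounded up to a multiple of `b + 1`. The truncated subtraction makes the
departure slot `c k` if `M.Tdep k ≤ c k`. -/
def staggeredSlot (M : CMMI) (b : ℕ) (c : ℕ → ℕ) (k i : ℕ) : ℕ :=
  c k + roundUp (b + 1) (M.Tdep k - c k) + M.distTo (fun e => roundUp (b + 1) (M.L e)) k i

lemma staggeredSlot_mod (hc : c k ≤ b) : M.staggeredSlot b c k i % (b + 1) = c k := by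
  have hdist : b + 1 ∣ M.distTo (fun e => roundUp (b + 1) (M.L e)) k i :=
    dvd_distTo fun _ => dvd_roundUp _ _
  rw [staggeredSlot, add_assoc, Nat.add_mod,
    Nat.mod_eq_zero_of_dvd ((dvd_roundUp _ _).add hdist), add_zero, Nat.mod_mod,
    Nat.mod_eq_of_lt (Nat.lt_succ_of_le hc)]

lemma Tdep_le_staggeredSlot : M.Tdep k ≤ M.staggeredSlot b c k i := by
  have := le_roundUp b.add_one_pos (M.Tdep k - c k)
  unfold staggeredSlot
  omega

lemma staggeredSlot_of_pred_eq_some (hk : k ∈ M.K) (h : M.pred k i = some j) :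
    M.staggeredSlot b c k i = M.staggeredSlot b c k j + roundUp (b + 1) (M.L (j, i)) := by
  rw [staggeredSlot, distTo_of_pred_eq_some hk h, ← add_assoc, staggeredSlot]

lemma staggeredSlot_le (hc : c k ≤ b) :
    M.staggeredSlot b c k i
      ≤ M.Tdep k + M.distTo M.L k i + ((M.route k).idxOf i + 1) * b := by
  have hdist : M.distTo (fun e => roundUp (b + 1) (M.L e)) k i
      ≤ M.distTo M.L k i + (M.route k).idxOf i * b :=
    distTo_le_distTo_add_mul fun e => Nat.le_of_lt_succ (roundUp_lt_add b.add_one_pos (M.L e))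
  have hdep : c k + roundUp (b + 1) (M.Tdep k - c k) ≤ M.Tdep k + b := by
    rcases le_total (M.Tdep k) (c k) with hle | hle
    · simp only [Nat.sub_eq_zero_of_le hle, roundUp, zero_ceilDiv, mul_zero]
      omega
    · have := roundUp_lt_add b.add_one_pos (M.Tdep k - c k)
      omega
  rw [staggeredSlot, add_one_mul]
  omega

lemma staggeredSlot_le_of_mem_rminus (hc : c k ≤ b) (hi : i ∈ M.rminus k) :
    M.staggeredSlot b c k i
      ≤ M.Tdep k + ((M.consec k).map M.L).sum + (M.rminus k).length * b := by
  refine (staggeredSlot_le hc).trans ?_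
  gcongr
  · exact distTo_le_sum_consec
  · exact idxOf_lt_length_dropLast hi

lemma staggeredSlot_add_le_of_pred_eq_some (hk : k ∈ M.K) (hc : c k ≤ b)
    (h : M.pred k i = some j) :
    M.staggeredSlot b c k j + M.L (j, i)
      ≤ M.Tdep k + ((M.consec k).map M.L).sum + (M.rminus k).length * b := by
  calc M.staggeredSlot b c k j + M.L (j, i)
      ≤ M.Tdep k + M.distTo M.L k j + ((M.route k).idxOf j + 1) * b + M.L (j, i) := by
        gcongr
        exact staggeredSlot_le hc
    _ = M.Tdep k + M.distTo M.L k i + ((M.route k).idxOf j + 1) * b := by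
        rw [distTo_of_pred_eq_some hk h]
        ring
    _ ≤ M.Tdep k + ((M.consec k).map M.L).sum + (M.rminus k).length * b := by
        gcongr
        · exact distTo_le_sum_consec
        · exact idxOf_lt_length_dropLast (mem_rminus_of_pred_eq_some h)

/-- The allocation giving every car `k` its `staggeredSlot` at each intersection of `M.rminus k`,
and no slot anywhere else. -/
def staggered (M : CMMI) (b : ℕ) (c : ℕ → ℕ) : Alloc := fun i k =>
  if k ∈ M.K ∧ i ∈ M.rminus k then some (M.staggeredSlot b c k i) else none

lemma staggered_eq_some_iff {t : ℕ} :
    M.staggered b c i k = some t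
      ↔ (k ∈ M.K ∧ i ∈ M.rminus k) ∧ M.staggeredSlot b c k i = t := by
  simp only [staggered, Option.ite_none_right_eq_some, Option.some.injEq]

lemma staggered_of_mem (hk : k ∈ M.K) (hi : i ∈ M.rminus k) :
    M.staggered b c i k = some (M.staggeredSlot b c k i) :=
  if_pos ⟨hk, hi⟩

lemma w_staggered_mem_Icc (hk : k ∈ M.K) (hi : i ∈ M.rminus k) :
    M.w (M.staggered b c) i k ∈ Set.Icc (0 : ℤ) b := by
  unfold w
  cases hpred : M.pred k i with
  | none => simp only [Set.mem_Icc, le_refl, Nat.cast_nonneg, and_self]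
  | some j =>
    have hle := le_roundUp b.add_one_pos (M.L (j, i))
    have hlt := roundUp_lt_add b.add_one_pos (M.L (j, i))
    simp only [staggered_of_mem hk hi, staggered_of_mem hk (mem_rminus_of_pred_eq_some hpred),
      staggeredSlot_of_pred_eq_some hk hpred, Set.mem_Icc]
    omega

lemma lCapOK_of_card_le (h : #M.K ≤ M.KUB) (a : Alloc) (t : ℕ) (e : ℕ × ℕ) :
    M.LCapOK a t e := by
  have : M.cnt a e.1 t ≤ #M.K := card_filter_le _ _
  unfold LCapOK
  omega

lemma not_fwdViolK_of_not_noneViolK {a : Alloc} (h : ¬ M.NoneViolK a k) : ¬ M.FwdViolK a k :=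
  fun ⟨_, _, j, hpred, _, hnone⟩ => h ⟨j, mem_rminus_of_pred_eq_some hpred, hnone⟩

lemma not_noneViolK_staggered (hk : k ∈ M.K) : ¬ M.NoneViolK (M.staggered b c) k :=
  fun ⟨_, hi, hnone⟩ => Option.some_ne_none _ ((staggered_of_mem hk hi).symm.trans hnone)

lemma not_depViol_staggered : ¬ M.DepViol (M.staggered b c) k := by
  rintro ⟨i, t, -, hslot, hlt⟩
  obtain ⟨-, rfl⟩ := staggered_eq_some_iff.1 hslot
  exact hlt.not_ge Tdep_le_staggeredSlot

lemma not_arrViol_staggered (hc : c k ≤ b)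
    (hT : M.Tdep k + ((M.consec k).map M.L).sum + (M.rminus k).length * b ≤ M.T) :
    ¬ M.ArrViol (M.staggered b c) k := by
  rintro ⟨iω, l, t, -, hpred, hslot, hlt⟩
  obtain ⟨⟨hk, -⟩, rfl⟩ := staggered_eq_some_iff.1 hslot
  exact hlt.not_ge ((staggeredSlot_add_le_of_pred_eq_some hk hc hpred).trans hT)

lemma not_colViolAt_staggered (hc : ∀ k ∈ M.K, c k ≤ b)
    (hinj : Set.InjOn c {k | k ∈ M.K ∧ i ∈ M.rminus k}) :
    ¬ M.ColViolAt (M.staggered b c) i := by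
  rintro ⟨k, hk, k', hk', hne, hi, hi', heq, -, -⟩
  rw [staggered_of_mem hk hi, staggered_of_mem hk' hi', Option.some.injEq] at heq
  have hphase : c k = c k' := by
    rw [← staggeredSlot_mod (hc k hk), heq, staggeredSlot_mod (hc k' hk')]
  exact hne (hinj ⟨hk, hi⟩ ⟨hk', hi'⟩ hphase)

lemma isAlloc_staggered (hc : ∀ k ∈ M.K, c k ≤ b)
    (hT : ∀ k ∈ M.K,
      M.Tdep k + ((M.consec k).map M.L).sum + (M.rminus k).length * b ≤ M.T) :
    M.IsAlloc (M.staggered b c) := by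
  intro i k t hslot
  obtain ⟨⟨hk, hi⟩, rfl⟩ := staggered_eq_some_iff.1 hslot
  exact (staggeredSlot_le_of_mem_rminus (hc k hk) hi).trans (hT k hk)

theorem feasible_staggered (hKUB : #M.K ≤ M.KUB) (hTUB : b ≤ M.TUB) (hc : ∀ k ∈ M.K, c k ≤ b)
    (hinj : ∀ i ∈ M.I, Set.InjOn c {k | k ∈ M.K ∧ i ∈ M.rminus k})
    (hT : ∀ k ∈ M.K,
      M.Tdep k + ((M.consec k).map M.L).sum + (M.rminus k).length * b ≤ M.T) :
    M.Feasible (M.staggered b c) := by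
  refine ⟨fun k hk i hi => ?_, fun e _ t _ => lCapOK_of_card_le hKUB _ t e,
    fun k _ => not_depViol_staggered, fun k hk => not_arrViol_staggered (hc k hk) (hT k hk),
    fun i hi => not_colViolAt_staggered hc (hinj i hi),
    fun k hk => not_fwdViolK_of_not_noneViolK (not_noneViolK_staggered hk),
    fun k hk => not_noneViolK_staggered hk⟩
  have hw : M.w (M.staggered b c) i k ∈ Set.Icc (0 : ℤ) b := w_staggered_mem_Icc hk hi
  exact ⟨hw.1, hw.2.trans (by exact_mod_cast hTUB)⟩

end CMMI

/-- Feasibility under non-binding bounds: with `K = |𝒦|`, `m = max_k |r_k^-|`, if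
`K_UB ≥ K`, `T_UB ≥ K − 1` and
`T ≥ max_k (T_k^o + Σ_{(i,j) consecutive on r_k} L_{(i,j)}) + m·(K − 1)`, then a feasible
allocation exists; moreover one with `0 ≤ w_{i,k} ≤ K − 1` for every `(i,k) ∈ IK`. -/
theorem cmmi_feasible_of_nonbinding_bounds (M : CMMI)
    (hKUB : (M.K.card : ℤ) ≤ (M.KUB : ℤ))
    (hTUB : (M.K.card : ℤ) - 1 ≤ (M.TUB : ℤ))
    (hT : ((M.K.sup (fun k => M.Tdep k + ((M.consec k).map M.L).sum) : ℕ) : ℤ)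
        + ((M.K.sup (fun k => (M.rminus k).length) : ℕ) : ℤ) * ((M.K.card : ℤ) - 1)
        ≤ (M.T : ℤ)) :
    ∃ a : Alloc, M.IsAlloc a ∧ M.Feasible a
      ∧ ∀ k ∈ M.K, ∀ i ∈ M.rminus k, 0 ≤ M.w a i k ∧ M.w a i k ≤ (M.K.card : ℤ) - 1 := by
  obtain ⟨c, hc_lt, hinj⟩ := exists_injOn_lt_card M.K
  have hcard : ∀ k ∈ M.K, ((#M.K - 1 : ℕ) : ℤ) = #M.K - 1 := fun k hk =>
    Nat.cast_pred (card_pos.2 ⟨k, hk⟩)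
  have hc : ∀ k ∈ M.K, c k ≤ #M.K - 1 := fun k hk => Nat.le_pred_of_lt (hc_lt k hk)
  have hT' : ∀ k ∈ M.K, M.Tdep k + ((M.consec k).map M.L).sum
      + (M.rminus k).length * (#M.K - 1) ≤ M.T := fun k hk => by
    rw [← hcard k hk] at hT
    refine le_trans ?_ (Int.ofNat_le.1 hT)
    gcongr
    · exact le_sup (f := fun k => M.Tdep k + ((M.consec k).map M.L).sum) hk
    · exact le_sup (f := fun k => (M.rminus k).length) hk
  refine ⟨M.staggered (#M.K - 1) c, CMMI.isAlloc_staggered hc hT',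
    CMMI.feasible_staggered (by exact_mod_cast hKUB) (by omega) hc
      (fun _ _ => hinj.mono fun _ h => h.1) hT', fun k hk i hi => ?_⟩
  rw [← hcard k hk]
  exact CMMI.w_staggered_mem_Icc hk hi
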